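/- Let n ≥ 4 and 1 ≤ p ≤ q−2 ≤ n−2. Then γ_{p,q} is undecomposable in PORD_n if and only if q−1 ∈ dom(γ_{p,q}) and n ∈ dom(γ_{p,q}), i.e. if and only if dom(γ_{p,q}) = [p, n]. -/

import Mathlib

/-!
Partial transformations on the chain X_n = {1 < 2 < ... < n}, encoded as
functions `ℕ → Option ℕ` (with `none` meaning "undefined"), composed
left-to-right: `x(αβ) = (xα)β`.
-/

namespace OrientedPT

noncomputable section
open scoped Classical

/-- A partial transformation, as a partial map on `ℕ`. -/
def PTrans : Type := ℕ → Option ℕ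

instance : Mul PTrans := ⟨fun f g x => (f x).bind g⟩

theorem mul_apply (f g : PTrans) (x : ℕ) : (f * g) x = (f x).bind g := rfl

instance : Semigroup PTrans where
  mul_assoc f g h := by
    funext x
    show ((f x).bind g).bind h = (f x).bind (fun y => (g y).bind h)
    cases f x <;> rfl

/-- The domain of a partial transformation. -/
def domSet (f : PTrans) : Set ℕ := {x | f x ≠ none}

/-- The image of a partial transformation. -/
def im (f : PTrans) : Set ℕ := {y | ∃ x, f x = some y}

/-- The set of fixed points: `fix(α) = {x ∈ dom α : xα = x}`. -/
def fixSet (f : PTrans) : Set ℕ := {x | f x = some x}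

/-- The value of `f` at `x` (defaulting to `0` off the domain). -/
def val (f : PTrans) (x : ℕ) : ℕ := (f x).getD 0

/-- `f` is a partial transformation on `X_n = {1,…,n}`. -/
def IsPT (n : ℕ) (f : PTrans) : Prop :=
  domSet f ⊆ Set.Icc 1 n ∧ im f ⊆ Set.Icc 1 n

/-- Order-decreasing: `xα ≤ x` for all `x ∈ dom α`. -/
def OrderDecr (f : PTrans) : Prop := ∀ x y, f x = some y → y ≤ x

/-- Order-preserving. -/
def OrderPres (f : PTrans) : Prop :=
  ∀ x y u v, f x = some u → f y = some v → x ≤ y → u ≤ v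

/-- Order-reversing. -/
def OrderRev (f : PTrans) : Prop :=
  ∀ x y u v, f x = some u → f y = some v → x ≤ y → v ≤ u

/-- Monotone: order-preserving or order-reversing. -/
def IsMonotone (f : PTrans) : Prop := OrderPres f ∨ OrderRev f

/-- Injectivity of a partial transformation. -/
def Inj (f : PTrans) : Prop := ∀ x y z, f x = some z → f y = some z → x = y

/-- The cyclic successor of `a` in the set `D`: the least element of `D`
above `a` if there is one, and otherwise the least element of `D`. -/
def cycSucc (D : Set ℕ) (a : ℕ) : ℕ :=
  if {x ∈ D | a < x}.Nonempty then sInf {x ∈ D | a < x} else sInf D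

/-- The cyclic descents of `f`: those `a ∈ dom f` whose cyclic successor in
`dom f` has a strictly smaller value. Writing `dom f = {x₁ < ⋯ < x_t}` these
are exactly the indices `1 ≤ i ≤ t` with `x_{i+1}α < x_iα` (where `x_{t+1} = x₁`). -/
def descents (f : PTrans) : Set ℕ :=
  {a ∈ domSet f | val f (cycSucc (domSet f) a) < val f a}

/-- The cyclic ascents of `f`. -/
def ascents (f : PTrans) : Set ℕ :=
  {a ∈ domSet f | val f a < val f (cycSucc (domSet f) a)}

/-- Orientation-preserving: at most one cyclic descent. -/
def OrientPres (f : PTrans) : Prop := (descents f).ncard ≤ 1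

/-- Orientation-reversing: at most one cyclic ascent. -/
def OrientRev (f : PTrans) : Prop := (ascents f).ncard ≤ 1

/-- Oriented: orientation-preserving or orientation-reversing. -/
def Oriented (f : PTrans) : Prop := OrientPres f ∨ OrientRev f

/-- `PORD n`: all oriented and order-decreasing partial transformations on `X_n`. -/
def PORD (n : ℕ) : Set PTrans := {f | IsPT n f ∧ Oriented f ∧ OrderDecr f}

/-- `PORD(n,r) = {α ∈ PORD_n : |im α| ≤ r}`. -/
def PORDr (n r : ℕ) : Set PTrans := {f ∈ PORD n | (im f).ncard ≤ r}

/-- `POPD n`: the orientation-preserving elements of `PORD n`. -/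
def POPD (n : ℕ) : Set PTrans := {f ∈ PORD n | OrientPres f}

/-- `PORD_n^* = PORD_n \ POPD_n`. -/
def PORDstar (n : ℕ) : Set PTrans := PORD n \ POPD n

/-- `PMD n`: monotone and order-decreasing partial transformations on `X_n`. -/
def PMD (n : ℕ) : Set PTrans := {f | IsPT n f ∧ IsMonotone f ∧ OrderDecr f}

/-- `PRD_n^* = PORD_n^* \ PMD_n`. -/
def PRDstar (n : ℕ) : Set PTrans := PORDstar n \ PMD n

/-- `IORD n`: the injective elements of `PORD n`. -/
def IORD (n : ℕ) : Set PTrans := {f ∈ PORD n | Inj f}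

/-- `IORD(n,r) = {α ∈ IORD_n : |im α| ≤ r}`. -/
def IORDr (n r : ℕ) : Set PTrans := {f ∈ IORD n | (im f).ncard ≤ r}

/-- `A` is a generating set of `S`: `A ⊆ S` and the smallest subsemigroup
containing `A` is `S`. -/
def IsGenSet (S A : Set PTrans) : Prop :=
  A ⊆ S ∧ (Subsemigroup.closure A : Set PTrans) = S

/-- A minimal generating set: a generating set of minimum cardinality. -/
def IsMinGenSet (S A : Set PTrans) : Prop :=
  IsGenSet S A ∧ ∀ B : Set PTrans, IsGenSet S B → A.ncard ≤ B.ncard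

/-- The rank of `S`: the minimum cardinality of a generating set of `S`. -/
def rank (S : Set PTrans) : ℕ :=
  sInf {k | ∃ A : Set PTrans, IsGenSet S A ∧ A.ncard = k}

/-- `z` is undecomposable in `S`: `z = xy` with `x, y ∈ S` forces `z = x` or `z = y`. -/
def Undecomposable (S : Set PTrans) (z : PTrans) : Prop :=
  ∀ x ∈ S, ∀ y ∈ S, z = x * y → z = x ∨ z = y

/-- `T` is a subsemigroup of (the semigroup given by the subset) `S`. -/
def IsSubsemigroupOf (T S : Set PTrans) : Prop :=
  T ⊆ S ∧ ∀ a ∈ T, ∀ b ∈ T, a * b ∈ T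

/-- `T` is a maximal subsemigroup of `S`: a maximal element, under inclusion,
of the family of proper subsemigroups of `S`. -/
def IsMaximalSubsemigroup (S T : Set PTrans) : Prop :=
  IsSubsemigroupOf T S ∧ T ≠ S ∧
    ∀ U : Set PTrans, IsSubsemigroupOf U S → U ≠ S → T ⊆ U → T = U

/-- The restriction of `f` to `Y`. -/
def restrict (f : PTrans) (Y : Set ℕ) : PTrans :=
  fun x => if x ∈ Y then f x else none

/-- The partial identity `1_Y` on `Y`. -/
def partialId (Y : Set ℕ) : PTrans := fun x => if x ∈ Y then some x else none

/-- `ξ_{p,q}`: domain `[p, q+1]`, fixes every point of `[p,q]`, maps `q+1` to `p`. -/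
def xi (p q : ℕ) : PTrans := fun x =>
  if p ≤ x ∧ x ≤ q then some x else if x = q + 1 then some p else none

/-- `γ_{p,q}` (for `1 ≤ p ≤ q−2 ≤ n−2`): with `k = min(p−1, q−p−1)` and
`l = min(q−p−1, n−q)`, it has domain `[p, p+k] ∪ [q, q+l]` and maps
`p+i ↦ p−i` and `q+j ↦ q−j`. -/
def gamma (n p q : ℕ) : PTrans := fun x =>
  if p ≤ x ∧ x ≤ p + min (p - 1) (q - p - 1) then some (2 * p - x)
  else if q ≤ x ∧ x ≤ q + min (q - p - 1) (n - q) then some (2 * q - x)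
  else none

/-- `γ_{p,q}^{r,s}`: with `u = min(r−s, q−p, n−q+1)`, it has domain
`[p, p+s−1] ∪ [q, q+u−1]` and maps `p+i ↦ p−i` and `q+j ↦ q−j`. -/
def gammaRS (n r p q s : ℕ) : PTrans := fun x =>
  if p ≤ x ∧ x + 1 ≤ p + s then some (2 * p - x)
  else if q ≤ x ∧ x + 1 ≤ q + min (r - s) (min (q - p) (n - q + 1)) then some (2 * q - x)
  else none

/-- `δ^a_Y`: domain `Y ∪ {a}`, fixes every point of `Y`, maps `a` to `a−1`. -/
def deltaMap (a : ℕ) (Y : Set ℕ) : PTrans :=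
  fun x => if x ∈ Y then some x else if x = a then some (a - 1) else none

/-- `ζ_Z`: with `a = max Z` and `b = min Z`, domain `Z ∪ {a+1}`, fixes every
point of `Z`, maps `a+1` to `b−1`. -/
def zetaMap (Z : Set ℕ) : PTrans :=
  fun x => if x ∈ Z then some x else if x = sSup Z + 1 then some (sInf Z - 1) else none

/-- `E_r`: the idempotents of `PORD_n` with image of size exactly `r`. -/
def Eset (n r : ℕ) : Set PTrans := {f ∈ PORD n | f * f = f ∧ (im f).ncard = r}

/-- `F_r = {ξ_{p,q}^r : 1 ≤ p ≤ n−2, p+1 ≤ q ≤ p+r−2 ≤ n−1}`. -/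
def Fset (n r : ℕ) : Set PTrans :=
  {f | ∃ p q : ℕ, 1 ≤ p ∧ p + 2 ≤ n ∧ p + 1 ≤ q ∧ q + 2 ≤ p + r ∧ p + r ≤ n + 1 ∧
    f = xi p q}

/-- `G_n = {γ_{p,q} : 1 ≤ p ≤ q−2 ≤ n−2} \ {γ_{1,n}}`. -/
def Gset (n : ℕ) : Set PTrans :=
  {f | ∃ p q : ℕ, 1 ≤ p ∧ p + 2 ≤ q ∧ q ≤ n ∧ f = gamma n p q} \ {gamma n 1 n}

/-- `H_n^r = {γ_{p,q}^{r,s} : 1 ≤ p ≤ q−2 ≤ n−2, 1 ≤ s ≤ min{p, q−p, r−1}, (q,s) ≠ (n,1)}`. -/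
def Hset (n r : ℕ) : Set PTrans :=
  {f | ∃ p q s : ℕ, 1 ≤ p ∧ p + 2 ≤ q ∧ q ≤ n ∧ 1 ≤ s ∧
    s ≤ min p (min (q - p) (r - 1)) ∧ ¬(q = n ∧ s = 1) ∧ f = gammaRS n r p q s}

/-- `EI_r = {1_Y : Y ⊆ X_n, |Y| = r}`. -/
def EIset (n r : ℕ) : Set PTrans :=
  {f | ∃ Y : Set ℕ, Y ⊆ Set.Icc 1 n ∧ Y.ncard = r ∧ f = partialId Y}

/-- `FI_r = {δ^a_Y : 2 ≤ a ≤ n, Y ⊆ X_n \ {a−1,a}, |Y| = r−1}`. -/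
def FIset (n r : ℕ) : Set PTrans :=
  {f | ∃ (a : ℕ) (Y : Set ℕ), 2 ≤ a ∧ a ≤ n ∧ Y ⊆ Set.Icc 1 n \ {a - 1, a} ∧
    Y.ncard = r - 1 ∧ f = deltaMap a Y}

/-- `GI_k = {ζ_Z : Z ⊆ X_n \ {1,n}, |Z| = k−1}`. -/
def GIset (n k : ℕ) : Set PTrans :=
  {f | ∃ Z : Set ℕ, Z ⊆ Set.Icc 1 n \ {1, n} ∧ Z.ncard = k - 1 ∧ f = zetaMap Z}

/-- `GI_k^c`: those `ζ_Z ∈ GI_k` with `Z` a convex subset (an interval). -/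
def GIcset (n k : ℕ) : Set PTrans :=
  {f | ∃ Z : Set ℕ, Z ⊆ Set.Icc 1 n \ {1, n} ∧ Z.ncard = k - 1 ∧ Z.OrdConnected ∧
    f = zetaMap Z}

/-- `F^r_{p,q} = {α ∈ PORD(n,r) : α restricted to [p, q+1] equals ξ_{p,q}^r}`. -/
def Frestr (n r p q : ℕ) : Set PTrans :=
  {f ∈ PORDr n r | restrict f (Set.Icc p (q + 1)) = xi p q}

/-- `G_{p,q} = {α ∈ PORD^*(n,r) : α restricted to dom(γ_{p,q}) equals γ_{p,q}}`. -/
def Grestr (n r p q : ℕ) : Set PTrans :=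
  {f ∈ PORDr n r ∩ PORDstar n | restrict f (domSet (gamma n p q)) = gamma n p q}

/-- `H^{r,s}_{p,q} = {α ∈ PORD^*(n,r) : α restricted to dom(γ^{r,s}_{p,q}) equals γ^{r,s}_{p,q}}`. -/
def Hrestr (n r p q s : ℕ) : Set PTrans :=
  {f ∈ PORDr n r ∩ PORDstar n |
    restrict f (domSet (gammaRS n r p q s)) = gammaRS n r p q s}

end

end OrientedPT

namespace OrientedPT

/-! ### Cyclic successors -/

theorem cycSucc_mem_of_lt {D : Set ℕ} {a b : ℕ} (hb : b ∈ D) (hab : a < b) :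
    cycSucc D a ∈ D ∧ a < cycSucc D a ∧ cycSucc D a ≤ b := by
  have hne : {x ∈ D | a < x}.Nonempty := ⟨b, hb, hab⟩
  rw [cycSucc, if_pos hne]
  exact ⟨(Nat.sInf_mem hne).1, (Nat.sInf_mem hne).2, Nat.sInf_le ⟨hb, hab⟩⟩

theorem cycSucc_eq_sInf {D : Set ℕ} {a : ℕ} (h : ∀ x ∈ D, x ≤ a) :
    cycSucc D a = sInf D := by
  rw [cycSucc, if_neg]
  rintro ⟨x, hx, hax⟩
  exact absurd (h x hx) (not_le.2 hax)

/-! ### Cyclic descents of a map into a linear order -/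

section CyclicDescents

variable {β : Type*} [LinearOrder β] {D : Set ℕ} {g : ℕ → β} {a b c : ℕ}

/-- The points of `D` at which `g` strictly decreases when passing to the cyclic successor. -/
def cycDescents (D : Set ℕ) (g : ℕ → β) : Set ℕ :=
  {a ∈ D | g (cycSucc D a) < g a}

theorem exists_cycDescent_between (ha : a ∈ D) (hb : b ∈ D) (hab : a ≤ b) (h : g b < g a) :
    ∃ d ∈ cycDescents D g, a ≤ d ∧ d < b := by
  induction hk : b - a using Nat.strong_induction_on generalizing a with
  | _ k ih =>
    have hlt : a < b := lt_of_le_of_ne hab (by rintro rfl; exact lt_irrefl _ h)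
    obtain ⟨hs, has, hsb⟩ := cycSucc_mem_of_lt hb hlt
    by_cases hd : g (cycSucc D a) < g a
    · exact ⟨a, ⟨ha, hd⟩, le_rfl, hlt⟩
    · obtain ⟨d, hd, h₁, h₂⟩ :=
        ih (b - cycSucc D a) (by omega) hs hsb (h.trans_le (not_lt.1 hd)) rfl
      exact ⟨d, hd, by omega, h₂⟩

theorem exists_cycDescent_outside (hD : D.Finite) (ha : a ∈ D) (hb : b ∈ D) (h : g a < g b) :
    ∃ d ∈ cycDescents D g, b ≤ d ∨ d < a := by
  obtain ⟨M, hM, hMmax⟩ := hD.exists_maximalFor id D ⟨a, ha⟩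
  have hmax : ∀ x ∈ D, x ≤ M := fun x hx => (le_total x M).elim id (fun h => hMmax hx h)
  have hmin : sInf D ∈ D := Nat.sInf_mem ⟨a, ha⟩
  by_cases h₁ : g M < g b
  · obtain ⟨d, hd, hbd, -⟩ := exists_cycDescent_between hb hM (hmax b hb) h₁
    exact ⟨d, hd, Or.inl hbd⟩
  by_cases h₂ : g (sInf D) < g M
  · exact ⟨M, ⟨hM, by rwa [cycSucc_eq_sInf hmax]⟩, Or.inl (hmax b hb)⟩
  · obtain ⟨d, hd, -, hda⟩ := exists_cycDescent_between hmin ha (Nat.sInf_le ha)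
      (h.trans_le ((not_lt.1 h₁).trans (not_lt.1 h₂)))
    exact ⟨d, hd, Or.inr hda⟩

/-- A map with at most one cyclic descent does not reverse the cyclic order of a triple. -/
theorem not_cyclic_reversed (hD : D.Finite) (hg : (cycDescents D g).ncard ≤ 1)
    (ha : a ∈ D) (hb : b ∈ D) (hc : c ∈ D) (hab : a < b) (hbc : b < c) :
    ¬(g c < g b ∧ g b < g a) ∧ ¬(g b < g a ∧ g a < g c) ∧ ¬(g a < g c ∧ g c < g b) := by
  have huniq := (Set.ncard_le_one (hD.subset (Set.sep_subset _ _))).1 hg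
  refine ⟨fun h => ?_, fun h => ?_, fun h => ?_⟩
  · obtain ⟨d, hd, h₁, h₂⟩ := exists_cycDescent_between ha hb hab.le h.2
    obtain ⟨e, he, h₃, h₄⟩ := exists_cycDescent_between hb hc hbc.le h.1
    have := huniq d hd e he
    omega
  · obtain ⟨d, hd, h₁, h₂⟩ := exists_cycDescent_between ha hb hab.le h.1
    obtain ⟨e, he, h₃⟩ := exists_cycDescent_outside hD ha hc h.2
    have := huniq d hd e he
    omega
  · obtain ⟨d, hd, h₁, h₂⟩ := exists_cycDescent_between hb hc hbc.le h.2
    obtain ⟨e, he, h₃⟩ := exists_cycDescent_outside hD ha hc h.1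
    have := huniq d hd e he
    omega

end CyclicDescents

/-! ### Products, extensions and partial identities -/

theorem mul_eq_some_iff {f g : PTrans} {x u : ℕ} :
    (f * g) x = some u ↔ ∃ z, f x = some z ∧ g z = some u :=
  Option.bind_eq_some_iff

theorem mul_apply_of_eq_some {f g : PTrans} {x z : ℕ} (h : f x = some z) : (f * g) x = g z := by
  rw [mul_apply, h]; rfl

theorem mul_apply_of_eq_none {f g : PTrans} {x : ℕ} (h : f x = none) : (f * g) x = none := by
  rw [mul_apply, h]; rfl

/-- The partial transformation `f`, redefined at `m` to take the value `v`. -/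
def extend (f : PTrans) (m v : ℕ) : PTrans := fun x => if x = m then some v else f x

theorem extend_self (f : PTrans) (m v : ℕ) : extend f m v m = some v := if_pos rfl

theorem extend_of_ne {f : PTrans} {m v x : ℕ} (h : x ≠ m) : extend f m v x = f x := if_neg h

open scoped Classical in
theorem partialId_of_mem {Y : Set ℕ} {x : ℕ} (h : x ∈ Y) : partialId Y x = some x := if_pos h

open scoped Classical in
theorem partialId_of_notMem {Y : Set ℕ} {x : ℕ} (h : x ∉ Y) : partialId Y x = none := if_neg h

/-! ### Oriented partial transformations -/

section Oriented

variable {n : ℕ} {f : PTrans} {a b c u v w : ℕ}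

theorem mem_domSet_of_eq_some (h : f a = some u) : a ∈ domSet f := by
  simp [domSet, h]

theorem val_of_eq_some (h : f a = some u) : val f a = u := by
  simp [val, h]

theorem eq_some_val (h : a ∈ domSet f) : f a = some (val f a) := by
  obtain ⟨u, hu⟩ := Option.ne_none_iff_exists'.1 h
  rw [hu, val_of_eq_some hu]

theorem IsPT.finite_domSet (hf : IsPT n f) : (domSet f).Finite :=
  (Set.finite_Icc 1 n).subset hf.1

theorem OrientPres.triple (hf : OrientPres f) (hfin : (domSet f).Finite)
    (ha : f a = some u) (hb : f b = some v) (hc : f c = some w) (hab : a < b) (hbc : b < c) :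
    ¬(w < v ∧ v < u) ∧ ¬(v < u ∧ u < w) ∧ ¬(u < w ∧ w < v) := by
  have := not_cyclic_reversed (g := val f) hfin hf (mem_domSet_of_eq_some ha)
    (mem_domSet_of_eq_some hb) (mem_domSet_of_eq_some hc) hab hbc
  rwa [val_of_eq_some ha, val_of_eq_some hb, val_of_eq_some hc] at this

theorem OrientRev.triple (hf : OrientRev f) (hfin : (domSet f).Finite)
    (ha : f a = some u) (hb : f b = some v) (hc : f c = some w) (hab : a < b) (hbc : b < c) :
    ¬(v < w ∧ u < v) ∧ ¬(u < v ∧ w < u) ∧ ¬(w < u ∧ v < w) := by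
  have := not_cyclic_reversed (g := fun x => OrderDual.toDual (val f x)) hfin hf
    (mem_domSet_of_eq_some ha) (mem_domSet_of_eq_some hb) (mem_domSet_of_eq_some hc) hab hbc
  simpa only [val_of_eq_some ha, val_of_eq_some hb, val_of_eq_some hc,
    OrderDual.toDual_lt_toDual] using this

theorem OrderPres.orientPres (hf : OrderPres f) : OrientPres f := by
  have key : ∀ a ∈ descents f, ∀ b ∈ domSet f, b ≤ a := by
    intro a ha b hb
    by_contra! hab
    obtain ⟨hs, has, -⟩ := cycSucc_mem_of_lt hb hab
    exact absurd ha.2 (not_lt.2 (hf _ _ _ _ (eq_some_val ha.1) (eq_some_val hs) has.le))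
  have hsub : (descents f).Subsingleton := fun a ha b hb =>
    le_antisymm (key b hb a ha.1) (key a ha b hb.1)
  exact (Set.ncard_le_one hsub.finite).2 fun a ha b hb => hsub ha hb

/-- A partial transformation that is order-reversing on both sides of a cut `s`, with the
values on the left below those on the right, is orientation-reversing. -/
theorem orientRev_of_cut {s m : ℕ} (hfin : (domSet f).Finite) (hm : m ∈ domSet f) (hms : m < s)
    (hanti : ∀ a b u v, f a = some u → f b = some v → a < b → b < s ∨ s ≤ a → v ≤ u)
    (hcut : ∀ a b u v, f a = some u → f b = some v → a < s → s ≤ b → u ≤ v) :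
    OrientRev f := by
  have hlt : ∀ a ∈ ascents f, a < s := by
    rintro a ⟨ha, hasc⟩
    by_contra! hsa
    refine absurd hasc (not_lt.2 ?_)
    by_cases h : ∃ b ∈ domSet f, a < b
    · obtain ⟨b, hb, hab⟩ := h
      obtain ⟨hs, has, -⟩ := cycSucc_mem_of_lt hb hab
      exact hanti _ _ _ _ (eq_some_val ha) (eq_some_val hs) has (Or.inr hsa)
    · push Not at h
      rw [cycSucc_eq_sInf h]
      exact hcut _ _ _ _ (eq_some_val (Nat.sInf_mem ⟨m, hm⟩)) (eq_some_val ha)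
        ((Nat.sInf_le hm).trans_lt hms) hsa
  have hle : ∀ a ∈ ascents f, ∀ b ∈ ascents f, b ≤ a := by
    intro a ha b hb
    by_contra! hab
    obtain ⟨hs, has, hsb⟩ := cycSucc_mem_of_lt hb.1 hab
    exact absurd ha.2 (not_lt.2 (hanti _ _ _ _ (eq_some_val ha.1) (eq_some_val hs) has
      (Or.inl (hsb.trans_lt (hlt b hb)))))
  exact (Set.ncard_le_one (hfin.subset (Set.sep_subset _ _))).2 fun a ha b hb =>
    le_antisymm (hle b hb a ha) (hle a ha b hb)

theorem partialId_mem_PORD {Y : Set ℕ} (hY : Y ⊆ Set.Icc 1 n) : partialId Y ∈ PORD n := by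
  have key : ∀ x y, partialId Y x = some y → x ∈ Y ∧ y = x := by
    intro x y h
    simp only [partialId] at h
    split_ifs at h with hx
    exact ⟨hx, (Option.some.inj h).symm⟩
  refine ⟨⟨fun x hx => hY (key _ _ (eq_some_val hx)).1, ?_⟩, Or.inl (OrderPres.orientPres ?_), ?_⟩
  · rintro y ⟨x, hx⟩
    obtain ⟨hx, rfl⟩ := key x y hx
    exact hY hx
  · intro x y u v hx hy hxy
    rwa [(key x u hx).2, (key y v hy).2]
  · intro x y h
    exact (key x y h).2.le

end Oriented

/-! ### Decomposing and not decomposing `γ_{p,q}` -/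

section Gamma

variable {n p q : ℕ}

theorem gamma_eq_some_iff {x y : ℕ} : gamma n p q x = some y ↔
    (p ≤ x ∧ x ≤ p + min (p - 1) (q - p - 1) ∧ y = 2 * p - x) ∨
    (¬(p ≤ x ∧ x ≤ p + min (p - 1) (q - p - 1)) ∧
      q ≤ x ∧ x ≤ q + min (q - p - 1) (n - q) ∧ y = 2 * q - x) := by
  unfold gamma
  split_ifs <;> simp <;> omega

theorem mem_domSet_gamma {x : ℕ} : x ∈ domSet (gamma n p q) ↔
    (p ≤ x ∧ x ≤ p + min (p - 1) (q - p - 1)) ∨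
    (q ≤ x ∧ x ≤ q + min (q - p - 1) (n - q)) := by
  simp only [domSet, gamma, Set.mem_ofPred_eq]
  split_ifs <;> simp <;> omega

theorem mem_domSet_gamma_iff_le (hp : 1 ≤ p) (hpq : p + 2 ≤ q) (hq : q ≤ n) :
    q - 1 ∈ domSet (gamma n p q) ∧ n ∈ domSet (gamma n p q) ↔ q ≤ 2 * p ∧ n + p + 1 ≤ 2 * q := by
  rw [mem_domSet_gamma, mem_domSet_gamma]
  omega

theorem domSet_gamma_eq_Icc_iff (hp : 1 ≤ p) (hpq : p + 2 ≤ q) (hq : q ≤ n) :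
    domSet (gamma n p q) = Set.Icc p n ↔
      q - 1 ∈ domSet (gamma n p q) ∧ n ∈ domSet (gamma n p q) := by
  constructor
  · intro h
    rw [h]
    simp only [Set.mem_Icc]
    omega
  · intro h
    rw [mem_domSet_gamma_iff_le hp hpq hq] at h
    ext x
    rw [mem_domSet_gamma, Set.mem_Icc]
    omega

theorem extend_gamma_mem_PORD {m v : ℕ} (hp : 1 ≤ p) (hpq : p + 2 ≤ q) (hq : q ≤ n)
    (h : (m = q - 1 ∧ v = 1 ∧ 2 * p < q) ∨ (m = n ∧ v = p + 1 ∧ 2 * q < n + p + 1)) :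
    extend (gamma n p q) m v ∈ PORD n := by
  set f : PTrans := extend (gamma n p q) m v with hf
  have key : ∀ x y, f x = some y → (x = m ∧ y = v) ∨ (x ≠ m ∧ gamma n p q x = some y) := by
    intro x y hxy
    by_cases hx : x = m
    · subst hx
      rw [hf, extend_self] at hxy
      exact Or.inl ⟨rfl, (Option.some.inj hxy).symm⟩
    · rw [hf, extend_of_ne hx] at hxy
      exact Or.inr ⟨hx, hxy⟩
  simp only [gamma_eq_some_iff] at key
  have hPT : IsPT n f := by
    constructor
    · intro x hx
      have := key _ _ (eq_some_val hx)
      rw [Set.mem_Icc]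
      omega
    · rintro y ⟨x, hx⟩
      have := key _ _ hx
      rw [Set.mem_Icc]
      omega
  have hpf : p ∈ domSet f := by
    have hpm : p ≠ m := by omega
    have : p ∈ domSet (gamma n p q) := mem_domSet_gamma.2 (by omega)
    rwa [domSet, Set.mem_ofPred_eq, hf, extend_of_ne hpm]
  refine ⟨hPT, Or.inr (orientRev_of_cut hPT.finite_domSet hpf (s := q) (by omega) ?_ ?_), ?_⟩
  · intro a b u w ha hb hab hs
    have h₁ := key _ _ ha
    have h₂ := key _ _ hb
    omega
  · intro a b u w ha hb has hsb
    have h₁ := key _ _ ha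
    have h₂ := key _ _ hb
    omega
  · intro x y hxy
    have := key _ _ hxy
    omega

theorem eq_partialId_mul_extend (f : PTrans) {m v : ℕ} (hm : m ∉ domSet f) :
    f = partialId (domSet f) * extend f m v := by
  funext x
  by_cases hx : x ∈ domSet f
  · have hxm : x ≠ m := by rintro rfl; exact hm hx
    rw [mul_apply_of_eq_some (partialId_of_mem hx), extend_of_ne hxm]
  · rw [mul_apply_of_eq_none (partialId_of_notMem hx)]
    simpa [domSet] using hx

theorem eq_partialId_of_undecomposable {m v : ℕ} (hpt : domSet (gamma n p q) ⊆ Set.Icc 1 n)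
    (hund : Undecomposable (PORD n) (gamma n p q)) (hm : m ∉ domSet (gamma n p q))
    (hmem : extend (gamma n p q) m v ∈ PORD n) :
    gamma n p q = partialId (domSet (gamma n p q)) := by
  refine (hund _ (partialId_mem_PORD hpt) _ hmem (eq_partialId_mul_extend _ hm)).resolve_right ?_
  intro h
  exact hm (mem_domSet_of_eq_some ((congrFun h m).trans (extend_self ..)))

theorem partialId_mul_partialId (Y Z : Set ℕ) :
    partialId Y * partialId Z = partialId (Y ∩ Z) := by
  funext x
  by_cases hY : x ∈ Y
  · rw [mul_apply_of_eq_some (partialId_of_mem hY)]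
    by_cases hZ : x ∈ Z
    · rw [partialId_of_mem hZ, partialId_of_mem (Set.mem_inter hY hZ)]
    · rw [partialId_of_notMem hZ, partialId_of_notMem fun h => hZ h.2]
  · rw [mul_apply_of_eq_none (partialId_of_notMem hY), partialId_of_notMem fun h => hY h.1]

theorem domSet_partialId (Y : Set ℕ) : domSet (partialId Y) = Y := by
  ext x
  simp [domSet, partialId]

theorem eq_or_eq_of_undecomposable_partialId {Y Z : Set ℕ} (hY : Y ⊆ Set.Icc 1 n)
    (hZ : Z ⊆ Set.Icc 1 n) (hund : Undecomposable (PORD n) (partialId (Y ∩ Z))) :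
    Y ∩ Z = Y ∨ Y ∩ Z = Z := by
  have := hund _ (partialId_mem_PORD hY) _ (partialId_mem_PORD hZ)
    (partialId_mul_partialId Y Z).symm
  exact this.imp (fun h => by simpa only [domSet_partialId] using congrArg domSet h)
    (fun h => by simpa only [domSet_partialId] using congrArg domSet h)

theorem mem_domSet_of_undecomposable (hn : 4 ≤ n) (hp : 1 ≤ p) (hpq : p + 2 ≤ q) (hq : q ≤ n)
    (hund : Undecomposable (PORD n) (gamma n p q)) :
    q - 1 ∈ domSet (gamma n p q) ∧ n ∈ domSet (gamma n p q) := by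
  rw [mem_domSet_gamma_iff_le hp hpq hq]
  by_contra hcon
  have hdom : domSet (gamma n p q) ⊆ Set.Icc 1 n := by
    intro x hx
    rw [mem_domSet_gamma] at hx
    rw [Set.mem_Icc]
    omega
  have hid : gamma n p q = partialId (domSet (gamma n p q)) := by
    by_cases h : q ≤ 2 * p
    · exact eq_partialId_of_undecomposable hdom hund (m := n) (by rw [mem_domSet_gamma]; omega)
        (extend_gamma_mem_PORD hp hpq hq (Or.inr ⟨rfl, rfl, by omega⟩))
    · exact eq_partialId_of_undecomposable hdom hund (m := q - 1) (by rw [mem_domSet_gamma]; omega)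
        (extend_gamma_mem_PORD hp hpq hq (Or.inl ⟨rfl, rfl, by omega⟩))
  have hfix : ∀ x y, gamma n p q x = some y → y = x := by
    intro x y hxy
    have hx := mem_domSet_of_eq_some hxy
    rw [hid, partialId, if_pos hx] at hxy
    exact (Option.some.inj hxy).symm
  have hp1 : p = 1 := by
    by_contra hne
    have := hfix (p + 1) (p - 1) (gamma_eq_some_iff.2 (by omega))
    omega
  have hqn : q = n := by
    by_contra hne
    have := hfix (q + 1) (q - 1) (gamma_eq_some_iff.2 (by omega))
    omega
  have hinter : domSet (gamma n p q) = {1, 2, n} ∩ {1, 3, n} := by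
    ext x
    rw [mem_domSet_gamma]
    simp only [Set.mem_inter_iff, Set.mem_insert_iff, Set.mem_singleton_iff]
    omega
  rw [hid, hinter] at hund
  have hsub : ∀ k, k = 2 ∨ k = 3 → ({1, k, n} : Set ℕ) ⊆ Set.Icc 1 n := by
    intro k hk x hx
    simp only [Set.mem_insert_iff, Set.mem_singleton_iff] at hx
    rw [Set.mem_Icc]
    omega
  rcases eq_or_eq_of_undecomposable_partialId (hsub 2 (Or.inl rfl)) (hsub 3 (Or.inr rfl)) hund
    with h | h
  · have : 2 ∈ ({1, 2, n} : Set ℕ) ∩ {1, 3, n} := by rw [h]; simp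
    simp at this
    omega
  · have : 3 ∈ ({1, 2, n} : Set ℕ) ∩ {1, 3, n} := by rw [h]; simp
    simp at this
    omega

theorem undecomposable_of_le (hp : 1 ≤ p) (hpq : p + 2 ≤ q) (hq : q ≤ n)
    (hqp : q ≤ 2 * p) (hnq : n + p + 1 ≤ 2 * q) : Undecomposable (PORD n) (gamma n p q) := by
  rintro x ⟨hxPT, hxor, hxdec⟩ y ⟨hyPT, hyor, hydec⟩ hxy
  have hleft : ∀ i, p ≤ i → i < q → gamma n p q i = some (2 * p - i) := fun i h₁ h₂ =>
    gamma_eq_some_iff.2 (by omega)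
  have hright : ∀ i, q ≤ i → i ≤ n → gamma n p q i = some (2 * q - i) := fun i h₁ h₂ =>
    gamma_eq_some_iff.2 (by omega)
  have hnone : ∀ i, i < p ∨ n < i → gamma n p q i = none := by
    intro i hi
    have : i ∉ domSet (gamma n p q) := by rw [mem_domSet_gamma]; omega
    simpa [domSet] using this
  have hexists : ∀ i, p ≤ i → i ≤ n → ∃ u, gamma n p q i = some u := fun i h₁ h₂ =>
    (lt_or_ge i q).elim (fun h => ⟨_, hleft i h₁ h⟩) (fun h => ⟨_, hright i h h₂⟩)
  have hmul : ∀ i u, gamma n p q i = some u → x i = some (val x i) ∧ y (val x i) = some u := by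
    intro i u hu
    rw [hxy, mul_eq_some_iff] at hu
    obtain ⟨z, hz, hzu⟩ := hu
    rw [val_of_eq_some hz]
    exact ⟨hz, hzu⟩
  have hX : ∀ i, p ≤ i → i ≤ n → x i = some (val x i) := fun i h₁ h₂ =>
    (hexists i h₁ h₂).elim fun u hu => (hmul i u hu).1
  have hXle : ∀ i, p ≤ i → i ≤ n → val x i ≤ i := fun i h₁ h₂ => hxdec _ _ (hX i h₁ h₂)
  have hXleft : ∀ i, p ≤ i → i < q → 2 * p - i ≤ val x i := fun i h₁ h₂ =>
    hydec _ _ (hmul i _ (hleft i h₁ h₂)).2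
  have hXright : ∀ i, q ≤ i → i ≤ n → 2 * q - i ≤ val x i := fun i h₁ h₂ =>
    hydec _ _ (hmul i _ (hright i h₁ h₂)).2
  have hXinj : ∀ i j, p ≤ i → i < j → j ≤ n → val x i ≠ val x j := by
    intro i j hi hij hj hval
    obtain ⟨u, hu⟩ := hexists i hi (by omega)
    obtain ⟨v, hv⟩ := hexists j (by omega) hj
    have huv := (hmul i u hu).2
    rw [hval, (hmul j v hv).2, Option.some.injEq] at huv
    rw [gamma_eq_some_iff] at hu hv
    omega
  have hXp : val x p = p := by
    have h₁ := hXle p le_rfl (by omega)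
    have h₂ := hXleft p le_rfl (by omega)
    omega
  have hXq : val x q = q := by
    have h₁ := hXle q (by omega) hq
    have h₂ := hXright q le_rfl hq
    omega
  have hxp : x p = some p := by rw [hX p le_rfl (by omega), hXp]
  have hxq : x q = some q := by rw [hX q (by omega) hq, hXq]
  -- An element of the semigroup agreeing with `γ` on `[p, n]` is `γ`.
  have hext : ∀ z : PTrans, IsPT n z → OrderDecr z → Oriented z →
      (∀ i, p ≤ i → i ≤ n → z i = gamma n p q i) → gamma n p q = z := by
    intro z hzPT hzdec hzor hz
    have hzp : z p = some p := by
      rw [hz p le_rfl (by omega), hleft p le_rfl (by omega)]; congr 1; omega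
    have hzq : z q = some q := by
      rw [hz q (by omega) hq, hright q le_rfl hq]; congr 1; omega
    have hzp' : z (p + 1) = some (p - 1) := by
      rw [hz (p + 1) (by omega) (by omega), hleft (p + 1) (by omega) (by omega)]; congr 1; omega
    have hzrev : OrientRev z := by
      refine hzor.resolve_left fun hpres => ?_
      have := hpres.triple hzPT.finite_domSet hzp hzp' hzq (by omega) (by omega)
      omega
    funext i
    by_cases hi : p ≤ i ∧ i ≤ n
    · exact (hz i hi.1 hi.2).symm
    rw [hnone i (by omega)]
    by_contra hne
    have hidom : i ∈ domSet z := Ne.symm hne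
    have hiX := hzPT.1 hidom
    rw [Set.mem_Icc] at hiX
    have hle := hzdec _ _ (eq_some_val hidom)
    have := hzrev.triple hzPT.finite_domSet (eq_some_val hidom) hzp hzq (by omega) (by omega)
    omega
  have hxfin := hxPT.finite_domSet
  rcases hxor with hpres | hrev
  · right
    have hgt : ∀ i, p < i → i ≤ n → p < val x i := by
      intro i hi hin
      rcases lt_or_ge i q with h | h
      · have h₁ := hpres.triple hxfin hxp (hX i hi.le hin) hxq hi h
        have h₂ := hXinj p i le_rfl hi hin
        omega
      · have := hXright i h hin
        omega
    have hge : ∀ k, p + k ≤ n → p + k ≤ val x (p + k) := by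
      intro k
      induction k with
      | zero => intro _; simp [hXp]
      | succ k ih =>
        intro hk
        have h₁ := ih (by omega)
        have h₂ := hgt (p + (k + 1)) (by omega) hk
        rcases Nat.eq_zero_or_pos k with rfl | hk0
        · omega
        have h₃ := hpres.triple hxfin hxp (hX (p + k) (by omega) (by omega))
          (hX (p + (k + 1)) (by omega) hk) (by omega) (by omega)
        have h₄ := hXinj (p + k) (p + (k + 1)) (by omega) (by omega) hk
        omega
    refine hext y hyPT hydec hyor fun i hi hin => ?_
    obtain ⟨u, hu⟩ := hexists i hi hin
    have h₁ := hge (i - p) (by omega)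
    rw [Nat.add_sub_cancel' hi] at h₁
    have h₂ := (hmul i u hu).2
    rwa [le_antisymm (hXle i hi hin) h₁, ← hu] at h₂
  · left
    have hlt : ∀ i, p < i → i < q → val x i < p := by
      intro i hi hiq
      have h₁ := hrev.triple hxfin hxp (hX i hi.le (by omega)) hxq hi hiq
      have h₂ := hXinj p i le_rfl hi (by omega)
      have h₃ := hXle i hi.le (by omega)
      omega
    have hlow : ∀ k, p + k < q → val x (p + k) + k ≤ p := by
      intro k
      induction k with
      | zero => intro _; simp [hXp]
      | succ k ih =>
        intro hk
        have h₁ := ih (by omega)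
        have h₂ := hlt (p + (k + 1)) (by omega) hk
        rcases Nat.eq_zero_or_pos k with rfl | hk0
        · omega
        have h₃ := hrev.triple hxfin (hX (p + k) (by omega) (by omega))
          (hX (p + (k + 1)) (by omega) (by omega)) hxq (by omega) hk
        have h₄ := hXinj (p + k) (p + (k + 1)) (by omega) (by omega) (by omega)
        omega
    have hhigh : ∀ k, q + k ≤ n → val x (q + k) + k ≤ q := by
      intro k
      induction k with
      | zero => intro _; simp [hXq]
      | succ k ih =>
        intro hk
        have h₁ := ih (by omega)
        have h₂ := hrev.triple hxfin hxp (hX (q + k) (by omega) (by omega))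
          (hX (q + (k + 1)) (by omega) hk) (by omega) (by omega)
        have h₃ := hXinj (q + k) (q + (k + 1)) (by omega) (by omega) hk
        have h₄ := hXright (q + k) (by omega) (by omega)
        omega
    refine hext x hxPT hxdec (Or.inr hrev) fun i hi hin => ?_
    rw [hX i hi hin]
    rcases lt_or_ge i q with h | h
    · have h₁ := hlow (i - p) (by omega)
      rw [Nat.add_sub_cancel' hi] at h₁
      have h₂ := hXleft i hi h
      rw [hleft i hi h]
      congr 1
      omega
    · have h₁ := hhigh (i - q) (by omega)
      rw [Nat.add_sub_cancel' h] at h₁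
      have h₂ := hXright i h hin
      rw [hright i h hin]
      congr 1
      omega

end Gamma

end OrientedPT

open OrientedPT in
/-- For `n ≥ 4` and `1 ≤ p ≤ q−2 ≤ n−2`, `γ_{p,q}` is
undecomposable in `PORD_n` iff `q−1` and `n` lie in its domain, i.e. iff its
domain is `[p,n]`. -/
theorem gamma_undecomposable_iff (n p q : ℕ) (hn : 4 ≤ n) (hp : 1 ≤ p)
    (hpq : p + 2 ≤ q) (hq : q ≤ n) :
    (Undecomposable (PORD n) (gamma n p q) ↔
      (q - 1 ∈ domSet (gamma n p q) ∧ n ∈ domSet (gamma n p q))) ∧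
    (Undecomposable (PORD n) (gamma n p q) ↔
      domSet (gamma n p q) = Set.Icc p n) := by
  have key : Undecomposable (PORD n) (gamma n p q) ↔
      q - 1 ∈ domSet (gamma n p q) ∧ n ∈ domSet (gamma n p q) :=
    ⟨mem_domSet_of_undecomposable hn hp hpq hq, fun h => by
      obtain ⟨h₁, h₂⟩ := (mem_domSet_gamma_iff_le hp hpq hq).1 h
      exact undecomposable_of_le hp hpq hq h₁ h₂⟩
  exact ⟨key, key.trans (domSet_gamma_eq_Icc_iff hp hpq hq).symm⟩
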